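/- arXiv:0812.4002 — 2 statements merged into one kernel-verified Lean document; each statement's English description precedes it below -/
import Mathlib

section
/- Let p ≥ 1 be an integer, k₀, k₁ ≥ 0, γ = p(k₀+k₁), and let j, q be non-negative integers. On the open wedge C = {(r cos θ, r sin θ) : r > 0, 0 < θ < π/(2p)} define the weight ω(r cos θ, r sin θ) = r^{γ}(sin pθ)^{k₀}(cos pθ)^{k₁}, the operator D u = Δu + 2⟨∇u, ∇ log ω⟩ on smooth functions on C, the function h(r cos θ, r sin θ) = r^{2jp} P_j^{(k₀−1/2,k₁−1/2)}(cos 2pθ), and f(x) = |x|^{2q} h(x). Then each iterate D^m f is smooth on C, D^m f = 0 for all m > q, and ∑_{m=0}^{q} [(−1/2)^m/m!] (D^m f)(x) = (−2)^q q! · L_q^{(2jp+γ)}(|x|²/2) · h(x) for all x ∈ C. (Up to normalization, the right-hand side is the W-invariant generalized Hermite polynomial H^W_{2q,2jp} of the even dihedral system: the image of |x|^{2q}h(x) under e^{−Δ_k^W/2} is a product of a univariate Laguerre polynomial in |x|²/2 and a Jacobi polynomial in cos 2pθ.) -/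
open Real Finset

/-- First partial derivative (in the first coordinate) of a function on `ℝ²`. -/
noncomputable def pd1 (f : ℝ × ℝ → ℝ) (x : ℝ × ℝ) : ℝ :=
  deriv (fun s => f (s, x.2)) x.1

/-- First partial derivative (in the second coordinate) of a function on `ℝ²`. -/
noncomputable def pd2 (f : ℝ × ℝ → ℝ) (x : ℝ × ℝ) : ℝ :=
  deriv (fun s => f (x.1, s)) x.2

/-- The `W`-invariant Dunkl Laplacian `D u = Δu + 2⟨∇u, ∇ log ω⟩` associated with a
weight `ω` on `ℝ²`. -/
noncomputable def Dop (ω : ℝ × ℝ → ℝ) (f : ℝ × ℝ → ℝ) : ℝ × ℝ → ℝ := fun x =>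
  pd1 (pd1 f) x + pd2 (pd2 f) x
    + 2 * (pd1 f x * pd1 (fun y => Real.log (ω y)) x
        + pd2 f x * pd2 (fun y => Real.log (ω y)) x)

/-- The Jacobi polynomial
`P_j^{(α,β)}(x) = ∑_{s=0}^{j} [Γ(j+α+1)/(Γ(s+α+1)(j−s)!)]·[Γ(j+β+1)/(Γ(j−s+β+1)s!)]
  ((x−1)/2)^s ((x+1)/2)^{j−s}`. -/
noncomputable def jacobiPoly (α β : ℝ) (j : ℕ) (x : ℝ) : ℝ :=
  ∑ s ∈ Finset.range (j + 1),
    (Real.Gamma ((j : ℝ) + α + 1) / (Real.Gamma ((s : ℝ) + α + 1) * (Nat.factorial (j - s)))) *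
    (Real.Gamma ((j : ℝ) + β + 1) / (Real.Gamma ((j : ℝ) - s + β + 1) * (Nat.factorial s))) *
    ((x - 1) / 2) ^ s * ((x + 1) / 2) ^ (j - s)

/-- The Laguerre polynomial
`L_q^{(α)}(x) = ∑_{m=0}^{q} [Γ(q+α+1)/(Γ(m+α+1)(q−m)!)] (−x)^m/m!`. -/
noncomputable def laguerrePoly (α : ℝ) (q : ℕ) (x : ℝ) : ℝ :=
  ∑ m ∈ Finset.range (q + 1),
    (Real.Gamma ((q : ℝ) + α + 1) / (Real.Gamma ((m : ℝ) + α + 1) * (Nat.factorial (q - m)))) *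
      (-x) ^ m / (Nat.factorial m)

/-!
Since `z ↦ z^p` is holomorphic, `u = Re z^p` and `v = Im z^p` are harmonic with orthogonal gradients
of equal length, and `log ω = k₀ log v + k₁ log u` on the wedge. Hence `D` maps each monomial
`v^{2s} u^{2(j-s)}` to `|∇u|²` times a combination of two monomials of lower degree, and the
recursion of the Jacobi coefficients makes the sum `h` of these monomials telescope: `D h = 0`. As
`h` and `ω` are homogeneous of degrees `2jp` and `γ`, Euler's identity gives
`D(|x|^{2n} h) = 4n(n + 2jp + γ) |x|^{2n-2} h`, and the products of these factors are, up to
normalization, the coefficients of the Laguerre polynomial.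
-/

section PlaneCalculus

open scoped Topology

/-- The pairing `⟨∇u, ∇v⟩` of the gradients of two functions on `ℝ²`. -/
noncomputable def gradInner (u v : ℝ × ℝ → ℝ) (x : ℝ × ℝ) : ℝ :=
  pd1 u x * pd1 v x + pd2 u x * pd2 v x

variable {u v w ω : ℝ × ℝ → ℝ} {x : ℝ × ℝ}

lemma differentiableAt_slice_fst (hu : DifferentiableAt ℝ u x) :
    DifferentiableAt ℝ (fun s => u (s, x.2)) x.1 :=
  hu.comp x.1 (f := fun s => (s, x.2)) (by fun_prop)

lemma differentiableAt_slice_snd (hu : DifferentiableAt ℝ u x) :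
    DifferentiableAt ℝ (fun s => u (x.1, s)) x.2 :=
  hu.comp x.2 (f := fun s => (x.1, s)) (by fun_prop)

lemma contDiffAt_slice_fst {n : WithTop ℕ∞} (hu : ContDiffAt ℝ n u x) :
    ContDiffAt ℝ n (fun s => u (s, x.2)) x.1 :=
  hu.comp x.1 (f := fun s => (s, x.2)) (by fun_prop)

lemma contDiffAt_slice_snd {n : WithTop ℕ∞} (hu : ContDiffAt ℝ n u x) :
    ContDiffAt ℝ n (fun s => u (x.1, s)) x.2 :=
  hu.comp x.2 (f := fun s => (x.1, s)) (by fun_prop)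

lemma eventuallyEq_slice_fst (huv : u =ᶠ[𝓝 x] v) :
    (fun s => u (s, x.2)) =ᶠ[𝓝 x.1] fun s => v (s, x.2) :=
  huv.comp_tendsto (Continuous.tendsto' (f := fun s => (s, x.2)) (by fun_prop) _ _ rfl)

lemma eventuallyEq_slice_snd (huv : u =ᶠ[𝓝 x] v) :
    (fun s => u (x.1, s)) =ᶠ[𝓝 x.2] fun s => v (x.1, s) :=
  huv.comp_tendsto (Continuous.tendsto' (f := fun s => (x.1, s)) (by fun_prop) _ _ rfl)

lemma gradInner_comm : gradInner u v x = gradInner v u x := by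
  simp only [gradInner, mul_comm]

lemma gradInner_congr_right (huv : u =ᶠ[𝓝 x] v) : gradInner w u x = gradInner w v x := by
  have h₁ : pd1 u x = pd1 v x := (eventuallyEq_slice_fst huv).deriv_eq
  have h₂ : pd2 u x = pd2 v x := (eventuallyEq_slice_snd huv).deriv_eq
  rw [gradInner, gradInner, h₁, h₂]

lemma gradInner_mul_right (hu : DifferentiableAt ℝ u x) (hv : DifferentiableAt ℝ v x) :
    gradInner w (fun y => u y * v y) x = u x * gradInner w v x + v x * gradInner w u x := by
  have h₁ : pd1 (fun y => u y * v y) x = pd1 u x * v x + u x * pd1 v x :=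
    deriv_fun_mul (differentiableAt_slice_fst hu) (differentiableAt_slice_fst hv)
  have h₂ : pd2 (fun y => u y * v y) x = pd2 u x * v x + u x * pd2 v x :=
    deriv_fun_mul (differentiableAt_slice_snd hu) (differentiableAt_slice_snd hv)
  simp only [gradInner, h₁, h₂]
  ring

lemma gradInner_mul_left (hu : DifferentiableAt ℝ u x) (hv : DifferentiableAt ℝ v x) :
    gradInner (fun y => u y * v y) w x = u x * gradInner v w x + v x * gradInner u w x := by
  simp only [gradInner_comm (v := w), gradInner_mul_right hu hv]

lemma gradInner_pow_right (hu : DifferentiableAt ℝ u x) (n : ℕ) :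
    gradInner w (fun y => u y ^ n) x = n * u x ^ (n - 1) * gradInner w u x := by
  have h₁ : pd1 (fun y => u y ^ n) x = n * u x ^ (n - 1) * pd1 u x :=
    deriv_fun_pow (differentiableAt_slice_fst hu) n
  have h₂ : pd2 (fun y => u y ^ n) x = n * u x ^ (n - 1) * pd2 u x :=
    deriv_fun_pow (differentiableAt_slice_snd hu) n
  simp only [gradInner, h₁, h₂]
  ring

lemma gradInner_pow_left (hu : DifferentiableAt ℝ u x) (n : ℕ) :
    gradInner (fun y => u y ^ n) w x = n * u x ^ (n - 1) * gradInner u w x := by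
  simp only [gradInner_comm (v := w), gradInner_pow_right hu]

lemma gradInner_log_right (hu : DifferentiableAt ℝ u x) (hx : u x ≠ 0) :
    gradInner w (fun y => log (u y)) x = gradInner w u x / u x := by
  have h₁ : pd1 (fun y => log (u y)) x = pd1 u x / u x :=
    deriv.log (differentiableAt_slice_fst hu) hx
  have h₂ : pd2 (fun y => log (u y)) x = pd2 u x / u x :=
    deriv.log (differentiableAt_slice_snd hu) hx
  simp only [gradInner, h₁, h₂]
  ring

lemma gradInner_sum_mul_right {ι : Type*} (I : Finset ι) (c : ι → ℝ) {u : ι → ℝ × ℝ → ℝ}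
    (hu : ∀ i ∈ I, DifferentiableAt ℝ (u i) x) :
    gradInner w (fun y => ∑ i ∈ I, c i * u i y) x = ∑ i ∈ I, c i * gradInner w (u i) x := by
  have h₁ : pd1 (fun y => ∑ i ∈ I, c i * u i y) x = ∑ i ∈ I, c i * pd1 (u i) x := by
    simpa only [pd1, deriv_const_mul_field] using
      deriv_fun_sum fun i hi => (differentiableAt_slice_fst (hu i hi)).const_mul (c i)
  have h₂ : pd2 (fun y => ∑ i ∈ I, c i * u i y) x = ∑ i ∈ I, c i * pd2 (u i) x := by
    simpa only [pd2, deriv_const_mul_field] using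
      deriv_fun_sum fun i hi => (differentiableAt_slice_snd (hu i hi)).const_mul (c i)
  simp only [gradInner, h₁, h₂, mul_sum, ← sum_add_distrib]
  exact sum_congr rfl fun i _ => by ring

lemma Dop_eq_iteratedDeriv :
    Dop ω u x = iteratedDeriv 2 (fun s => u (s, x.2)) x.1
      + iteratedDeriv 2 (fun s => u (x.1, s)) x.2 + 2 * gradInner u (fun y => log (ω y)) x := by
  simp only [iteratedDeriv_succ, iteratedDeriv_zero]
  rfl

lemma Dop_congr (huv : u =ᶠ[𝓝 x] v) : Dop ω u x = Dop ω v x := by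
  rw [Dop_eq_iteratedDeriv, Dop_eq_iteratedDeriv, (eventuallyEq_slice_fst huv).iteratedDeriv_eq,
    (eventuallyEq_slice_snd huv).iteratedDeriv_eq, gradInner_comm, gradInner_congr_right huv,
    gradInner_comm]

lemma Dop_const (c : ℝ) : Dop ω (fun _ => c) x = 0 := by
  simp [Dop, pd1, pd2]

lemma Dop_mul (hu : ContDiffAt ℝ 2 u x) (hv : ContDiffAt ℝ 2 v x) :
    Dop ω (fun y => u y * v y) x = u x * Dop ω v x + v x * Dop ω u x + 2 * gradInner u v x := by
  have leibniz {f g : ℝ → ℝ} {t : ℝ} (hf : ContDiffAt ℝ 2 f t) (hg : ContDiffAt ℝ 2 g t) :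
      iteratedDeriv 2 (fun s => f s * g s) t = f t * iteratedDeriv 2 g t
        + 2 * (deriv f t * deriv g t) + iteratedDeriv 2 f t * g t := by
    rw [← Pi.mul_def, iteratedDeriv_mul hf hg]
    simp [sum_range_succ, mul_assoc]
  rw [Dop_eq_iteratedDeriv, gradInner_mul_left (hu.differentiableAt two_ne_zero)
    (hv.differentiableAt two_ne_zero),
    leibniz (contDiffAt_slice_fst hu) (contDiffAt_slice_fst hv),
    leibniz (contDiffAt_slice_snd hu) (contDiffAt_slice_snd hv), Dop_eq_iteratedDeriv,
    Dop_eq_iteratedDeriv]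
  simp only [gradInner, pd1, pd2]
  ring

lemma Dop_const_mul (c : ℝ) : Dop ω (fun y => c * u y) x = c * Dop ω u x := by
  simp only [Dop, pd1, pd2, deriv_const_mul_field]
  ring

lemma Dop_sum_mul {ι : Type*} (I : Finset ι) (c : ι → ℝ) {u : ι → ℝ × ℝ → ℝ}
    (hu : ∀ i ∈ I, ContDiffAt ℝ 2 (u i) x) :
    Dop ω (fun y => ∑ i ∈ I, c i * u i y) x = ∑ i ∈ I, c i * Dop ω (u i) x := by
  have hsmul i (hi : i ∈ I) : ContDiffAt ℝ 2 (fun y => c i * u i y) x :=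
    contDiffAt_const.mul (hu i hi)
  rw [Dop_eq_iteratedDeriv, gradInner_comm, gradInner_sum_mul_right I c fun i hi =>
      (hu i hi).differentiableAt two_ne_zero,
    iteratedDeriv_fun_sum fun i hi => contDiffAt_slice_fst (hsmul i hi),
    iteratedDeriv_fun_sum fun i hi => contDiffAt_slice_snd (hsmul i hi), mul_sum,
    ← sum_add_distrib, ← sum_add_distrib]
  refine sum_congr rfl fun i _ => ?_
  rw [Dop_eq_iteratedDeriv, iteratedDeriv_const_mul_field, iteratedDeriv_const_mul_field,
    gradInner_comm]
  ring

lemma Dop_pow (hu : ContDiffAt ℝ 2 u x) (n : ℕ) :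
    Dop ω (fun y => u y ^ n) x = n * u x ^ (n - 1) * Dop ω u x
      + n * (n - 1) * u x ^ (n - 2) * gradInner u u x := by
  induction n with
  | zero => simp [Dop_const]
  | succ n ih =>
    simp only [pow_succ]
    rw [Dop_mul (hu.pow n) hu, ih, gradInner_pow_left (hu.differentiableAt two_ne_zero)]
    rcases n with _ | _ | n
    · simp
    · simp
      ring
    · simp only [Nat.add_sub_cancel, show n + 2 - 2 = n by rfl, show n + 2 - 1 = n + 1 by rfl,
        show n + 3 - 2 = n + 1 by rfl]
      push_cast
      ring

lemma iterate_Dop_eqOn {C : Set (ℝ × ℝ)} (hC : IsOpen C) {f : ℝ × ℝ → ℝ}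
    {g : ℕ → ℝ × ℝ → ℝ} {c : ℕ → ℝ} (hg : ∀ n, ∀ x ∈ C, Dop ω (g n) x = c n * g (n - 1) x)
    {q : ℕ} (hf : Set.EqOn f (g q) C) (m : ℕ) :
    Set.EqOn ((Dop ω)^[m] f) (fun x => (∏ i ∈ range m, c (q - i)) * g (q - m) x) C := by
  induction m with
  | zero => simpa using hf
  | succ m ih =>
    intro x hx
    rw [Function.iterate_succ_apply', Dop_congr (ih.eventuallyEq_of_mem (hC.mem_nhds hx)),
      Dop_const_mul, hg _ x hx, Nat.sub_sub, ← mul_assoc, ← prod_range_succ fun i => c (q - i)]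

end PlaneCalculus

section Radial

/-- The squared Euclidean norm `|x|²` on `ℝ²`. -/
def radiusSq (x : ℝ × ℝ) : ℝ := x.1 ^ 2 + x.2 ^ 2

/-- The factor `4n(n + b)` by which `D` maps `|x|^{2n} h` to `|x|^{2n-2} h`, where `D h = 0` and
`b` is the degree of homogeneity of `h` plus that of the weight. -/
def lowerCoeff (b : ℝ) (n : ℕ) : ℝ := 4 * n * (n + b)

variable {h v ω : ℝ × ℝ → ℝ} {x : ℝ × ℝ}

lemma contDiff_radiusSq {n : WithTop ℕ∞} : ContDiff ℝ n radiusSq := by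
  unfold radiusSq
  fun_prop

lemma pd1_radiusSq : pd1 radiusSq = fun x => 2 * x.1 := by
  ext x
  simp [pd1, radiusSq]

lemma pd2_radiusSq : pd2 radiusSq = fun x => 2 * x.2 := by
  ext x
  simp [pd2, radiusSq]

lemma gradInner_radiusSq : gradInner radiusSq v x = 2 * (x.1 * pd1 v x + x.2 * pd2 v x) := by
  simp only [gradInner, pd1_radiusSq, pd2_radiusSq]
  ring

lemma gradInner_radiusSq_self : gradInner radiusSq radiusSq x = 4 * radiusSq x := by
  rw [gradInner_radiusSq, pd1_radiusSq, pd2_radiusSq, radiusSq]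
  ring

lemma Dop_radiusSq :
    Dop ω radiusSq x = 4 + 2 * gradInner radiusSq (fun y => log (ω y)) x := by
  have hlap : pd1 (pd1 radiusSq) x + pd2 (pd2 radiusSq) x = 4 := by
    rw [pd1_radiusSq, pd2_radiusSq]
    norm_num [pd1, pd2]
  rw [← hlap]
  rfl

/-- The two pairings with `∇|x|²` are Euler's identities for `h` of degree `n` and for a weight of
degree `γ`. -/
lemma Dop_radiusSq_pow_mul {n γ : ℝ} (hh : ContDiffAt ℝ 2 h x)
    (h_euler : gradInner radiusSq h x = 2 * n * h x)
    (hω_euler : gradInner radiusSq (fun y => log (ω y)) x = 2 * γ)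
    (h_harmonic : Dop ω h x = 0) (q : ℕ) :
    Dop ω (fun y => radiusSq y ^ q * h y) x
      = lowerCoeff (n + γ) q * (radiusSq x ^ (q - 1) * h x) := by
  have hR : ContDiffAt ℝ 2 radiusSq x := contDiff_radiusSq.contDiffAt
  rw [Dop_mul (hR.pow q) hh, gradInner_pow_left (hR.differentiableAt two_ne_zero), h_harmonic,
    Dop_pow hR, Dop_radiusSq, h_euler, hω_euler, gradInner_radiusSq_self, lowerCoeff]
  rcases q with _ | _ | q
  · simp
  · simp
    ring
  · simp only [show q + 2 - 2 = q by rfl, show q + 2 - 1 = q + 1 by rfl]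
    push_cast
    ring

end Radial

section HolomorphicCoordinates

open scoped Topology

/-- The real part of a complex function, as a function on `ℝ² ≃ ℂ`. -/
noncomputable def rePart (F : ℂ → ℂ) (x : ℝ × ℝ) : ℝ := (F (Complex.equivRealProdCLM.symm x)).re

/-- The imaginary part of a complex function, as a function on `ℝ² ≃ ℂ`. -/
noncomputable def imPart (F : ℂ → ℂ) (x : ℝ × ℝ) : ℝ := (F (Complex.equivRealProdCLM.symm x)).im

variable {F : ℂ → ℂ} {ω w : ℝ × ℝ → ℝ} {x : ℝ × ℝ}

lemma contDiff_rePart (hF : Differentiable ℂ F) {n : WithTop ℕ∞} : ContDiff ℝ n (rePart F) :=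
  Complex.reCLM.contDiff.comp
    ((hF.contDiff.restrict_scalars ℝ).comp Complex.equivRealProdCLM.symm.contDiff)

lemma contDiff_imPart (hF : Differentiable ℂ F) {n : WithTop ℕ∞} : ContDiff ℝ n (imPart F) :=
  Complex.imCLM.contDiff.comp
    ((hF.contDiff.restrict_scalars ℝ).comp Complex.equivRealProdCLM.symm.contDiff)

lemma hasDerivAt_slice_fst (hF : Differentiable ℂ F) (x : ℝ × ℝ) :
    HasDerivAt (fun s : ℝ => F (Complex.equivRealProdCLM.symm (s, x.2)))
      (deriv F (Complex.equivRealProdCLM.symm x)) x.1 := by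
  have hline : HasDerivAt (fun s : ℝ => Complex.equivRealProdCLM.symm (s, x.2)) 1 x.1 := by
    simpa only [Complex.equivRealProdCLM_symm_apply, Complex.ofReal_one, id] using
      ((hasDerivAt_id x.1).ofReal_comp.add_const (x.2 * Complex.I))
  exact ((hF _).hasDerivAt.scomp x.1 hline).congr_deriv (one_smul ℂ _)

lemma hasDerivAt_slice_snd (hF : Differentiable ℂ F) (x : ℝ × ℝ) :
    HasDerivAt (fun s : ℝ => F (Complex.equivRealProdCLM.symm (x.1, s)))
      (Complex.I * deriv F (Complex.equivRealProdCLM.symm x)) x.2 := by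
  have hline : HasDerivAt (fun s : ℝ => Complex.equivRealProdCLM.symm (x.1, s)) Complex.I x.2 := by
    simpa only [Complex.equivRealProdCLM_symm_apply, Complex.ofReal_one, one_mul, id] using
      (((hasDerivAt_id x.2).ofReal_comp.mul_const Complex.I).const_add (x.1 : ℂ))
  exact (hF _).hasDerivAt.scomp x.2 hline

lemma pd1_rePart (hF : Differentiable ℂ F) : pd1 (rePart F) = rePart (deriv F) :=
  funext fun x =>
    (Complex.reCLM.hasFDerivAt.comp_hasDerivAt x.1 (hasDerivAt_slice_fst hF x)).deriv

lemma pd1_imPart (hF : Differentiable ℂ F) : pd1 (imPart F) = imPart (deriv F) :=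
  funext fun x =>
    (Complex.imCLM.hasFDerivAt.comp_hasDerivAt x.1 (hasDerivAt_slice_fst hF x)).deriv

lemma pd2_rePart (hF : Differentiable ℂ F) : pd2 (rePart F) = fun x => -imPart (deriv F) x :=
  funext fun x =>
    (Complex.reCLM.hasFDerivAt.comp_hasDerivAt x.2 (hasDerivAt_slice_snd hF x)).deriv.trans
      (Complex.I_mul_re _)

lemma pd2_imPart (hF : Differentiable ℂ F) : pd2 (imPart F) = rePart (deriv F) :=
  funext fun x =>
    (Complex.imCLM.hasFDerivAt.comp_hasDerivAt x.2 (hasDerivAt_slice_snd hF x)).deriv.trans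
      (Complex.I_mul_im _)

lemma Dop_rePart (hF : Differentiable ℂ F) :
    Dop ω (rePart F) x = 2 * gradInner (rePart F) (fun y => log (ω y)) x := by
  have hlap : pd1 (pd1 (rePart F)) x + pd2 (pd2 (rePart F)) x = 0 := by
    rw [pd1_rePart hF, pd2_rePart hF, pd1_rePart hF.deriv, pd2, deriv.fun_neg, ← pd2,
      pd2_imPart hF.deriv, add_neg_cancel]
  rw [← zero_add (2 * _), ← hlap]
  rfl

lemma Dop_imPart (hF : Differentiable ℂ F) :
    Dop ω (imPart F) x = 2 * gradInner (imPart F) (fun y => log (ω y)) x := by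
  have hlap : pd1 (pd1 (imPart F)) x + pd2 (pd2 (imPart F)) x = 0 := by
    rw [pd1_imPart hF, pd2_imPart hF, pd1_imPart hF.deriv, pd2_rePart hF.deriv, add_neg_cancel]
  rw [← zero_add (2 * _), ← hlap]
  rfl

lemma gradInner_rePart_imPart (hF : Differentiable ℂ F) :
    gradInner (rePart F) (imPart F) x = 0 := by
  simp only [gradInner, pd1_rePart hF, pd2_rePart hF, pd1_imPart hF, pd2_imPart hF]
  ring

lemma gradInner_imPart_self (hF : Differentiable ℂ F) :
    gradInner (imPart F) (imPart F) x = gradInner (rePart F) (rePart F) x := by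
  simp only [gradInner, pd1_rePart hF, pd2_rePart hF, pd1_imPart hF, pd2_imPart hF]
  ring

lemma gradInner_radiusSq_rePart (hF : Differentiable ℂ F) :
    gradInner radiusSq (rePart F) x = 2 * rePart (fun z => z * deriv F z) x := by
  simp only [gradInner_radiusSq, pd1_rePart hF, pd2_rePart hF]
  simp [rePart, imPart]
  ring

lemma gradInner_radiusSq_imPart (hF : Differentiable ℂ F) :
    gradInner radiusSq (imPart F) x = 2 * imPart (fun z => z * deriv F z) x := by
  simp only [gradInner_radiusSq, pd1_imPart hF, pd2_imPart hF]
  simp [rePart, imPart]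

variable {k₀ k₁ : ℝ}

lemma gradInner_log_weight (hF : Differentiable ℂ F) (hre : rePart F x ≠ 0) (him : imPart F x ≠ 0)
    (hω : (fun y => log (ω y))
      =ᶠ[𝓝 x] fun y => k₀ * log (imPart F y) + k₁ * log (rePart F y)) :
    gradInner w (fun y => log (ω y)) x
      = k₀ * (gradInner w (imPart F) x / imPart F x)
        + k₁ * (gradInner w (rePart F) x / rePart F x) := by
  have hu := (contDiff_rePart hF (n := 1)).differentiable one_ne_zero x
  have hv := (contDiff_imPart hF (n := 1)).differentiable one_ne_zero x
  have hsum := gradInner_sum_mul_right (w := w) univ ![k₀, k₁]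
    (u := ![fun y => log (imPart F y), fun y => log (rePart F y)]) (x := x)
    (by simp [Fin.forall_fin_two, hu.log hre, hv.log him])
  simpa [gradInner_congr_right hω, gradInner_log_right hu hre, gradInner_log_right hv him]
    using hsum

end HolomorphicCoordinates

section Jacobi

variable {α β : ℝ} {j : ℕ}

/-- The coefficient of `((x-1)/2)^s ((x+1)/2)^(j-s)` in the Jacobi polynomial `P_j^{(α,β)}`. -/
noncomputable def jacobiCoeff (α β : ℝ) (j s : ℕ) : ℝ :=
  Gamma (j + α + 1) / (Gamma (s + α + 1) * (j - s).factorial)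
    * (Gamma (j + β + 1) / (Gamma (j - s + β + 1) * s.factorial))

/-- The homogeneous form `(u² + v²)^j P_j^{(α,β)}((u² - v²) / (u² + v²))` of the Jacobi polynomial;
both `(x-1)/2 = -v² / (u² + v²)` and `(x+1)/2 = u² / (u² + v²)` are single terms. -/
noncomputable def jacobiForm (α β : ℝ) (j : ℕ) (u v : ℝ) : ℝ :=
  ∑ s ∈ range (j + 1), (-1) ^ s * jacobiCoeff α β j s * (v ^ (2 * s) * u ^ (2 * (j - s)))

lemma jacobiForm_polar (ρ φ : ℝ) :
    jacobiForm α β j (ρ * cos φ) (ρ * sin φ) = ρ ^ (2 * j) * jacobiPoly α β j (cos (2 * φ)) := by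
  have hsub : (cos (2 * φ) - 1) / 2 = -sin φ ^ 2 := by
    rw [cos_two_mul, sin_sq]
    ring
  have hadd : (cos (2 * φ) + 1) / 2 = cos φ ^ 2 := by
    rw [cos_two_mul]
    ring
  rw [jacobiForm, jacobiPoly, mul_sum, hsub, hadd]
  refine sum_congr rfl fun s hs => ?_
  obtain ⟨t, rfl⟩ := Nat.exists_eq_add_of_le (mem_range_succ_iff.mp hs)
  simp only [jacobiCoeff, Nat.add_sub_cancel_left, neg_pow (sin φ ^ 2)]
  ring

lemma jacobiCoeff_succ_mul (hα : -1 < α) (hβ : -1 < β) {s : ℕ} (hs : s < j) :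
    jacobiCoeff α β j (s + 1) * ((s + 1) * (s + 1 + α))
      = jacobiCoeff α β j s * ((j - s) * (j - s + β)) := by
  obtain ⟨t, rfl⟩ := Nat.exists_eq_add_of_lt hs
  have hsα : 0 < (s : ℝ) + α + 1 := by linarith [s.cast_nonneg (α := ℝ)]
  have htβ : 0 < (t : ℝ) + β + 1 := by linarith [t.cast_nonneg (α := ℝ)]
  have hΓs : Gamma (s + α + 1 + 1) = (s + α + 1) * Gamma (s + α + 1) := Gamma_add_one hsα.ne'
  have hΓt : Gamma (t + β + 1 + 1) = (t + β + 1) * Gamma (t + β + 1) := Gamma_add_one htβ.ne'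
  simp only [jacobiCoeff, show s + t + 1 - s = t + 1 by omega,
    show s + t + 1 - (s + 1) = t by omega, Nat.factorial_succ]
  push_cast
  rw [show (s : ℝ) + 1 + α + 1 = s + α + 1 + 1 by ring,
    show (s : ℝ) + t + 1 - s + β + 1 = t + β + 1 + 1 by ring,
    show (s : ℝ) + t + 1 - (s + 1) + β + 1 = t + β + 1 by ring, hΓs, hΓt]
  field_simp [(Gamma_pos_of_pos hsα).ne', (Gamma_pos_of_pos htβ).ne']
  ring

/-- The homogeneous form of Jacobi's differential equation, with `U = u²` and `V = v²`. The
coefficient recursion makes the sum telescope. -/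
lemma sum_jacobiCoeff_eq_zero (hα : -1 < α) (hβ : -1 < β) (U V : ℝ) :
    ∑ s ∈ range (j + 1), (-1) ^ s * jacobiCoeff α β j s
      * (s * (s + α) * (V ^ (s - 1) * U ^ (j - s))
        + (j - s) * (j - s + β) * (V ^ s * U ^ (j - s - 1))) = 0 := by
  simp only [mul_add, sum_add_distrib]
  rw [sum_range_succ', sum_range_succ _ j]
  simp only [Nat.cast_zero, zero_mul, mul_zero, sub_self, add_zero]
  rw [← sum_add_distrib]
  refine sum_eq_zero fun s hs => ?_
  have hrec := jacobiCoeff_succ_mul hα hβ (mem_range.mp hs)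
  rw [Nat.add_sub_cancel, Nat.sub_sub, pow_succ]
  push_cast
  linear_combination -(-1) ^ s * (V ^ s * U ^ (j - (s + 1))) * hrec

variable {F : ℂ → ℂ} {ω w : ℝ × ℝ → ℝ} {x : ℝ × ℝ}

lemma contDiff_jacobiForm_comp (hF : Differentiable ℂ F) {n : WithTop ℕ∞} :
    ContDiff ℝ n fun y => jacobiForm α β j (rePart F y) (imPart F y) :=
  ContDiff.sum fun _ _ => contDiff_const.mul
    (((contDiff_imPart hF).pow _).mul ((contDiff_rePart hF).pow _))

lemma gradInner_jacobiForm_comp {n : ℝ} (hF : Differentiable ℂ F)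
    (hre : gradInner w (rePart F) x = n * rePart F x)
    (him : gradInner w (imPart F) x = n * imPart F x) :
    gradInner w (fun y => jacobiForm α β j (rePart F y) (imPart F y)) x
      = 2 * j * n * jacobiForm α β j (rePart F x) (imPart F x) := by
  have hu := (contDiff_rePart hF (n := 1)).differentiable one_ne_zero x
  have hv := (contDiff_imPart hF (n := 1)).differentiable one_ne_zero x
  have mul_pow_pred (a : ℝ) (m : ℕ) : m * a ^ (m - 1) * (n * a) = m * n * a ^ m := by
    rcases m with _ | m
    · simp
    · rw [Nat.add_sub_cancel]
      ring
  simp only [jacobiForm]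
  rw [gradInner_sum_mul_right _ _ fun s _ => (hv.fun_pow _).fun_mul (hu.fun_pow _), mul_sum]
  refine sum_congr rfl fun s hs => ?_
  rw [gradInner_mul_right (hv.fun_pow _) (hu.fun_pow _), gradInner_pow_right hu,
    gradInner_pow_right hv, hre, him, mul_pow_pred, mul_pow_pred]
  push_cast [Nat.cast_sub (mem_range_succ_iff.mp hs)]
  ring

lemma Dop_pow_two_mul {u : ℝ × ℝ → ℝ} {κ : ℝ} (hu : ContDiffAt ℝ 2 u x) (hx : u x ≠ 0)
    (hD : Dop ω u x = 2 * (κ * (gradInner u u x / u x))) (t : ℕ) :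
    Dop ω (fun y => u y ^ (2 * t)) x
      = 4 * (t * (t + (κ - 1 / 2))) * (u x ^ 2) ^ (t - 1) * gradInner u u x := by
  rw [Dop_pow hu, hD]
  rcases t with _ | t
  · simp
  · rw [show 2 * (t + 1) - 1 = 2 * t + 1 by omega, show 2 * (t + 1) - 2 = 2 * t by omega,
      Nat.add_sub_cancel, pow_succ, pow_mul]
    push_cast
    field_simp
    ring

variable {k₀ k₁ : ℝ}

lemma Dop_jacobiForm_comp (hF : Differentiable ℂ F) (hk₀ : -1 / 2 < k₀) (hk₁ : -1 / 2 < k₁)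
    (hre : rePart F x ≠ 0) (him : imPart F x ≠ 0)
    (hω : (fun y => log (ω y))
      =ᶠ[nhds x] fun y => k₀ * log (imPart F y) + k₁ * log (rePart F y)) :
    Dop ω (fun y => jacobiForm (k₀ - 1 / 2) (k₁ - 1 / 2) j (rePart F y) (imPart F y)) x = 0 := by
  have hu : ContDiffAt ℝ 2 (rePart F) x := (contDiff_rePart hF).contDiffAt
  have hv : ContDiffAt ℝ 2 (imPart F) x := (contDiff_imPart hF).contDiffAt
  have horth := gradInner_rePart_imPart hF (x := x)
  have hDu : Dop ω (rePart F) x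
      = 2 * (k₁ * (gradInner (rePart F) (rePart F) x / rePart F x)) := by
    rw [Dop_rePart hF, gradInner_log_weight hF hre him hω, horth]
    ring
  have hDv : Dop ω (imPart F) x
      = 2 * (k₀ * (gradInner (imPart F) (imPart F) x / imPart F x)) := by
    rw [Dop_imPart hF, gradInner_log_weight hF hre him hω, gradInner_comm (v := rePart F), horth]
    ring
  have hcross m n : gradInner (fun y => imPart F y ^ m) (fun y => rePart F y ^ n) x = 0 := by
    rw [gradInner_pow_left (hv.differentiableAt two_ne_zero),
      gradInner_pow_right (hu.differentiableAt two_ne_zero), gradInner_comm, horth]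
    ring
  simp only [jacobiForm]
  rw [Dop_sum_mul _ _ fun s _ => (hv.pow _).mul (hu.pow _)]
  rw [← mul_zero (4 * gradInner (rePart F) (rePart F) x),
    ← sum_jacobiCoeff_eq_zero (j := j) (show -1 < k₀ - 1 / 2 by linarith)
      (show -1 < k₁ - 1 / 2 by linarith) (rePart F x ^ 2) (imPart F x ^ 2), mul_sum]
  refine sum_congr rfl fun s hs => ?_
  rw [Dop_mul (hv.pow _) (hu.pow _), hcross, Dop_pow_two_mul hu hre hDu,
    Dop_pow_two_mul hv him hDv, gradInner_imPart_self hF, pow_mul, pow_mul,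
    Nat.cast_sub (mem_range_succ_iff.mp hs)]
  ring

end Jacobi

section Laguerre

variable {b : ℝ}

lemma prod_lowerCoeff_eq_zero {q m : ℕ} (hqm : q < m) :
    ∏ i ∈ range m, lowerCoeff b (q - i) = 0 :=
  prod_eq_zero (mem_range.mpr hqm) (by simp [lowerCoeff])

lemma prod_lowerCoeff_mul_Gamma (hb : -1 < b) (n m : ℕ) :
    (∏ i ∈ range m, lowerCoeff b (n + m - i)) * (n.factorial * Gamma (n + b + 1))
      = 4 ^ m * ((n + m).factorial * Gamma ((n + m : ℕ) + b + 1)) := by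
  induction m with
  | zero => simp
  | succ m ih =>
    have hpos : 0 < ((n + m : ℕ) : ℝ) + b + 1 := by linarith [(n + m).cast_nonneg (α := ℝ)]
    have hΓ : Gamma ((n + (m + 1) : ℕ) + b + 1)
        = ((n + m : ℕ) + b + 1) * Gamma ((n + m : ℕ) + b + 1) := by
      rw [← Gamma_add_one hpos.ne']
      push_cast
      ring_nf
    have hprod : ∏ i ∈ range (m + 1), lowerCoeff b (n + (m + 1) - i)
        = (∏ i ∈ range m, lowerCoeff b (n + m - i)) * lowerCoeff b (n + m + 1) := by
      rw [prod_range_succ']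
      exact congrArg (· * _) (prod_congr rfl fun i _ => by congr 1; omega)
    rw [hprod, hΓ, mul_right_comm, ih, ← add_assoc, Nat.factorial_succ, lowerCoeff]
    push_cast
    ring

lemma sum_prod_lowerCoeff_eq_laguerrePoly (hb : -1 < b) (q : ℕ) (ρ : ℝ) :
    ∑ m ∈ range (q + 1), (-1 / 2) ^ m / m.factorial
        * ((∏ i ∈ range m, lowerCoeff b (q - i)) * ρ ^ (q - m))
      = (-2) ^ q * q.factorial * laguerrePoly b q (ρ / 2) := by
  rw [laguerrePoly, ← sum_range_reflect, mul_sum]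
  refine sum_congr rfl fun n hn => ?_
  obtain ⟨m, rfl⟩ := Nat.exists_eq_add_of_le (mem_range_succ_iff.mp hn)
  have hΓ : Gamma (n + b + 1) ≠ 0 :=
    (Gamma_pos_of_pos (by linarith [n.cast_nonneg (α := ℝ)])).ne'
  have hpow : (-2 : ℝ) ^ (n + m) * (-(ρ / 2)) ^ n = (-1 / 2) ^ m * 4 ^ m * ρ ^ n := by
    rw [pow_add, mul_right_comm, ← mul_pow, ← mul_pow]
    ring_nf
  rw [show n + m + 1 - 1 - n = m by omega, Nat.add_sub_cancel, Nat.add_sub_cancel_left,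
    eq_div_of_mul_eq (by positivity) (prod_lowerCoeff_mul_Gamma hb n m)]
  field_simp
  linear_combination -Gamma ((n + m : ℕ) + b + 1) * hpow

end Laguerre

section Sector

/-- The open sector of the plane swept by the polar angles strictly between `0` and `α`. -/
def sector (α : ℝ) : Set (ℝ × ℝ) :=
  {x | ∃ r θ : ℝ, 0 < r ∧ 0 < θ ∧ θ < α ∧ x = (r * cos θ, r * sin θ)}

lemma isOpen_sector {α : ℝ} (hα : α ≤ π) : IsOpen (sector α) := by
  have hsub : Set.Ioi 0 ×ˢ Set.Ioo 0 α ⊆ polarCoord.target := by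
    rw [polarCoord_target]
    exact Set.prod_mono_right (Set.Ioo_subset_Ioo (neg_nonpos.mpr pi_pos.le) hα)
  convert polarCoord.isOpen_image_symm_of_subset_target (isOpen_Ioi.prod isOpen_Ioo) hsub
  ext x
  simp only [sector, Set.mem_ofPred_eq, Set.mem_image, Set.mem_prod, Set.mem_Ioi, Set.mem_Ioo,
    Prod.exists, polarCoord_symm_apply, and_assoc, eq_comm (a := x)]

end Sector

section Dihedral

variable {p j : ℕ} {k₀ k₁ : ℝ} {ω h : ℝ × ℝ → ℝ} {x : ℝ × ℝ}

lemma equivRealProdCLM_symm_polar_pow (r θ : ℝ) :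
    Complex.equivRealProdCLM.symm (r * cos θ, r * sin θ) ^ p
      = (r ^ p : ℝ) * ((cos (p * θ) : ℝ) + (sin (p * θ) : ℝ) * Complex.I) := by
  push_cast
  rw [← Complex.cos_add_sin_mul_I_pow, ← mul_pow, Complex.equivRealProdCLM_symm_apply]
  push_cast
  ring

lemma rePart_pow_polar (r θ : ℝ) :
    rePart (· ^ p) (r * cos θ, r * sin θ) = r ^ p * cos (p * θ) := by
  rw [rePart, equivRealProdCLM_symm_polar_pow, Complex.re_ofReal_mul]
  simp [-Complex.ofReal_cos, -Complex.ofReal_sin]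

lemma imPart_pow_polar (r θ : ℝ) :
    imPart (· ^ p) (r * cos θ, r * sin θ) = r ^ p * sin (p * θ) := by
  rw [imPart, equivRealProdCLM_symm_polar_pow, Complex.im_ofReal_mul]
  simp [-Complex.ofReal_cos, -Complex.ofReal_sin]

lemma mul_deriv_pow (z : ℂ) : z * deriv (fun y => y ^ p) z = p • z ^ p := by
  rcases p with _ | p
  · simp
  · rw [deriv_pow_field, mul_left_comm, mul_pow_sub_one p.succ_ne_zero, nsmul_eq_mul]

lemma gradInner_radiusSq_rePart_pow :
    gradInner radiusSq (rePart (· ^ p)) x = 2 * p * rePart (· ^ p) x := by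
  rw [gradInner_radiusSq_rePart (differentiable_pow p)]
  simp only [mul_deriv_pow, rePart, Complex.re_nsmul]
  rw [nsmul_eq_mul, mul_assoc]

lemma gradInner_radiusSq_imPart_pow :
    gradInner radiusSq (imPart (· ^ p)) x = 2 * p * imPart (· ^ p) x := by
  rw [gradInner_radiusSq_imPart (differentiable_pow p)]
  simp only [mul_deriv_pow, imPart, Complex.im_nsmul]
  rw [nsmul_eq_mul, mul_assoc]

lemma cos_mul_pos_of_lt {a θ : ℝ} (ha : 0 < a) (hθ₀ : 0 < θ) (hθ : θ < π / (2 * a)) :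
    0 < cos (a * θ) := by
  rw [lt_div_iff₀ (by positivity)] at hθ
  exact cos_pos_of_mem_Ioo ⟨by linarith [pi_pos, mul_pos ha hθ₀], by linarith⟩

lemma sin_mul_pos_of_lt {a θ : ℝ} (ha : 0 < a) (hθ₀ : 0 < θ) (hθ : θ < π / (2 * a)) :
    0 < sin (a * θ) := by
  rw [lt_div_iff₀ (by positivity)] at hθ
  exact sin_pos_of_pos_of_lt_pi (by positivity) (by linarith [pi_pos])

lemma rePart_pow_pos (hp : 0 < p) (hx : x ∈ sector (π / (2 * p))) : 0 < rePart (· ^ p) x := by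
  obtain ⟨r, θ, hr, hθ₀, hθ, rfl⟩ := hx
  rw [rePart_pow_polar]
  exact mul_pos (pow_pos hr p) (cos_mul_pos_of_lt (Nat.cast_pos.mpr hp) hθ₀ hθ)

lemma imPart_pow_pos (hp : 0 < p) (hx : x ∈ sector (π / (2 * p))) : 0 < imPart (· ^ p) x := by
  obtain ⟨r, θ, hr, hθ₀, hθ, rfl⟩ := hx
  rw [imPart_pow_polar]
  exact mul_pos (pow_pos hr p) (sin_mul_pos_of_lt (Nat.cast_pos.mpr hp) hθ₀ hθ)

lemma log_weight_eqOn_sector (hp : 0 < p)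
    (hω : ∀ r θ : ℝ, 0 < r → 0 < θ → θ < π / (2 * p) →
      ω (r * cos θ, r * sin θ) = r ^ (p * (k₀ + k₁)) * sin (p * θ) ^ k₀ * cos (p * θ) ^ k₁) :
    Set.EqOn (fun y => log (ω y))
      (fun y => k₀ * log (imPart (· ^ p) y) + k₁ * log (rePart (· ^ p) y))
      (sector (π / (2 * p))) := by
  rintro _ ⟨r, θ, hr, hθ₀, hθ, rfl⟩
  have hsin := sin_mul_pos_of_lt (Nat.cast_pos.mpr hp) hθ₀ hθ
  have hcos := cos_mul_pos_of_lt (Nat.cast_pos.mpr hp) hθ₀ hθ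
  simp only [hω r θ hr hθ₀ hθ, rePart_pow_polar, imPart_pow_polar]
  rw [log_mul (by positivity) (by positivity), log_mul (by positivity) (by positivity),
    log_mul (by positivity) (by positivity), log_mul (by positivity) (by positivity),
    log_rpow hr, log_rpow hsin, log_rpow hcos, log_pow]
  ring

/-- The solution `r^{2jp} P_j^{(k₀-1/2,k₁-1/2)}(cos 2pθ)` of `D h = 0`, as a polynomial in
`Re z^p` and `Im z^p`. -/
noncomputable def dihedralHarmonic (p j : ℕ) (k₀ k₁ : ℝ) (x : ℝ × ℝ) : ℝ :=
  jacobiForm (k₀ - 1 / 2) (k₁ - 1 / 2) j (rePart (· ^ p) x) (imPart (· ^ p) x)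

lemma dihedralHarmonic_polar (r θ : ℝ) :
    dihedralHarmonic p j k₀ k₁ (r * cos θ, r * sin θ)
      = r ^ (2 * j * p) * jacobiPoly (k₀ - 1 / 2) (k₁ - 1 / 2) j (cos (2 * p * θ)) := by
  rw [dihedralHarmonic, rePart_pow_polar, imPart_pow_polar, jacobiForm_polar, ← pow_mul,
    mul_comm p, mul_assoc 2 (p : ℝ)]

lemma contDiff_dihedralHarmonic {n : WithTop ℕ∞} : ContDiff ℝ n (dihedralHarmonic p j k₀ k₁) :=
  contDiff_jacobiForm_comp (differentiable_pow p)

lemma Dop_radiusSq_pow_mul_dihedralHarmonic (hk₀ : -1 / 2 < k₀) (hk₁ : -1 / 2 < k₁)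
    (hre : rePart (· ^ p) x ≠ 0) (him : imPart (· ^ p) x ≠ 0)
    (hω : (fun y => log (ω y))
      =ᶠ[nhds x] fun y => k₀ * log (imPart (· ^ p) y) + k₁ * log (rePart (· ^ p) y)) (q : ℕ) :
    Dop ω (fun y => radiusSq y ^ q * dihedralHarmonic p j k₀ k₁ y) x
      = lowerCoeff (2 * j * p + p * (k₀ + k₁)) q
        * (radiusSq x ^ (q - 1) * dihedralHarmonic p j k₀ k₁ x) := by
  have hF : Differentiable ℂ (fun z : ℂ => z ^ p) := differentiable_pow p
  have hω_euler : gradInner radiusSq (fun y => log (ω y)) x = 2 * (p * (k₀ + k₁)) := by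
    rw [gradInner_log_weight hF hre him hω, gradInner_radiusSq_rePart_pow,
      gradInner_radiusSq_imPart_pow, mul_div_cancel_right₀ _ hre, mul_div_cancel_right₀ _ him]
    ring
  have h_euler : gradInner radiusSq (dihedralHarmonic p j k₀ k₁) x
      = 2 * (2 * j * p) * dihedralHarmonic p j k₀ k₁ x :=
    (gradInner_jacobiForm_comp hF gradInner_radiusSq_rePart_pow
      gradInner_radiusSq_imPart_pow).trans (by rw [dihedralHarmonic]; ring)
  exact Dop_radiusSq_pow_mul contDiff_dihedralHarmonic.contDiffAt h_euler hω_euler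
    (Dop_jacobiForm_comp hF hk₀ hk₁ hre him hω) q

lemma iterate_Dop_radiusSq_pow_mul_dihedralHarmonic (hp : 0 < p) (hk₀ : -1 / 2 < k₀)
    (hk₁ : -1 / 2 < k₁)
    (hω : ∀ r θ : ℝ, 0 < r → 0 < θ → θ < π / (2 * p) →
      ω (r * cos θ, r * sin θ) = r ^ (p * (k₀ + k₁)) * sin (p * θ) ^ k₀ * cos (p * θ) ^ k₁)
    {q : ℕ} {f : ℝ × ℝ → ℝ}
    (hf : Set.EqOn f (fun x => radiusSq x ^ q * dihedralHarmonic p j k₀ k₁ x)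
      (sector (π / (2 * p)))) (m : ℕ) :
    Set.EqOn ((Dop ω)^[m] f)
      (fun x => (∏ i ∈ range m, lowerCoeff (2 * j * p + p * (k₀ + k₁)) (q - i))
        * (radiusSq x ^ (q - m) * dihedralHarmonic p j k₀ k₁ x)) (sector (π / (2 * p))) := by
  have hopen : IsOpen (sector (π / (2 * p))) := isOpen_sector <|
    div_le_self pi_pos.le (by exact_mod_cast (by omega : 1 ≤ 2 * p))
  exact iterate_Dop_eqOn hopen
    (g := fun n x => radiusSq x ^ n * dihedralHarmonic p j k₀ k₁ x) (fun n x hx =>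
    Dop_radiusSq_pow_mul_dihedralHarmonic hk₀ hk₁ (rePart_pow_pos hp hx).ne'
      (imPart_pow_pos hp hx).ne'
      ((log_weight_eqOn_sector hp hω).eventuallyEq_of_mem (hopen.mem_nhds hx)) n) hf m

theorem stmt_14_general (hp : 0 < p) (hk₀ : -1 / 2 < k₀) (hk₁ : -1 / 2 < k₁)
    (hb : -1 < 2 * j * p + p * (k₀ + k₁))
    (hω : ∀ r θ : ℝ, 0 < r → 0 < θ → θ < π / (2 * p) →
      ω (r * cos θ, r * sin θ) = r ^ (p * (k₀ + k₁)) * sin (p * θ) ^ k₀ * cos (p * θ) ^ k₁)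
    (hh : ∀ r θ : ℝ, 0 < r → 0 < θ → θ < π / (2 * p) →
      h (r * cos θ, r * sin θ)
        = r ^ (2 * j * p) * jacobiPoly (k₀ - 1 / 2) (k₁ - 1 / 2) j (cos (2 * p * θ)))
    {q : ℕ} {f : ℝ × ℝ → ℝ} (hf : ∀ x, f x = (x.1 ^ 2 + x.2 ^ 2) ^ q * h x) :
    (∀ m : ℕ, ContDiffOn ℝ (⊤ : ℕ∞) ((Dop ω)^[m] f) (sector (π / (2 * p))))
    ∧ (∀ m : ℕ, q < m → ∀ x ∈ sector (π / (2 * p)), (Dop ω)^[m] f x = 0)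
    ∧ ∀ x ∈ sector (π / (2 * p)),
        ∑ m ∈ range (q + 1), (-1 / 2) ^ m / m.factorial * (Dop ω)^[m] f x
          = (-2) ^ q * q.factorial
            * laguerrePoly (2 * j * p + p * (k₀ + k₁)) q ((x.1 ^ 2 + x.2 ^ 2) / 2) * h x := by
  have hH : Set.EqOn h (dihedralHarmonic p j k₀ k₁) (sector (π / (2 * p))) := by
    rintro _ ⟨r, θ, hr, hθ₀, hθ, rfl⟩
    rw [hh r θ hr hθ₀ hθ, dihedralHarmonic_polar]
  have hiter := iterate_Dop_radiusSq_pow_mul_dihedralHarmonic hp hk₀ hk₁ hω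
    fun x hx => (hf x).trans (congrArg _ (hH hx))
  refine ⟨fun m => ?_, fun m hm x hx => ?_, fun x hx => ?_⟩
  · exact (contDiff_const.mul ((contDiff_radiusSq.pow _).mul
      contDiff_dihedralHarmonic)).contDiffOn.congr (hiter m)
  · simp only [hiter m hx, prod_lowerCoeff_eq_zero hm, zero_mul]
  · calc _ = (∑ m ∈ range (q + 1), (-1 / 2) ^ m / m.factorial
            * ((∏ i ∈ range m, lowerCoeff (2 * j * p + p * (k₀ + k₁)) (q - i))
              * radiusSq x ^ (q - m))) * dihedralHarmonic p j k₀ k₁ x := by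
          simp only [hiter _ hx, sum_mul, mul_assoc]
      _ = _ := by
          rw [sum_prod_lowerCoeff_eq_laguerrePoly hb, ← hH hx, radiusSq]

end Dihedral

/-- For the even dihedral system `I₂(2p)` with weight
`ω(r cos θ, r sin θ) = r^γ (sin pθ)^{k₀}(cos pθ)^{k₁}`, `γ = p(k₀+k₁)`, the `W`-invariant
Dunkl Laplacian `D = Δ + 2⟨∇ log ω, ∇·⟩` applied to `f(x) = |x|^{2q} h(x)`, with
`h(r cos θ, r sin θ) = r^{2jp} P_j^{(k₀−1/2,k₁−1/2)}(cos 2pθ)`, satisfies: each iterate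
`D^m f` is smooth on the wedge `C`, `D^m f = 0` on `C` for `m > q`, and
`e^{−D/2}f = ∑_{m=0}^{q} (−1/2)^m D^m f/m! = (−2)^q q! L_q^{(2jp+γ)}(|x|²/2) h(x)` on `C`. -/
theorem stmt_14 (p : ℕ) (hp : 1 ≤ p) (k₀ k₁ : ℝ) (hk₀ : 0 ≤ k₀) (hk₁ : 0 ≤ k₁)
    (γ : ℝ) (hγ : γ = p * (k₀ + k₁)) (j q : ℕ)
    (C : Set (ℝ × ℝ))
    (hC : C = {x : ℝ × ℝ | ∃ r θ : ℝ, 0 < r ∧ 0 < θ ∧ θ < π / (2 * p) ∧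
        x = (r * cos θ, r * sin θ)})
    (ω : ℝ × ℝ → ℝ)
    (hω : ∀ r θ : ℝ, 0 < r → 0 < θ → θ < π / (2 * p) →
        ω (r * cos θ, r * sin θ) = r ^ γ * sin (p * θ) ^ k₀ * cos (p * θ) ^ k₁)
    (h : ℝ × ℝ → ℝ)
    (hh : ∀ r θ : ℝ, 0 < r → 0 < θ → θ < π / (2 * p) →
        h (r * cos θ, r * sin θ)
          = r ^ (2 * j * p) * jacobiPoly (k₀ - 1 / 2) (k₁ - 1 / 2) j (cos (2 * p * θ)))
    (f : ℝ × ℝ → ℝ) (hf : ∀ x : ℝ × ℝ, f x = (x.1 ^ 2 + x.2 ^ 2) ^ q * h x) :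
    (∀ m : ℕ, ContDiffOn ℝ (⊤ : ℕ∞) ((Dop ω)^[m] f) C)
    ∧ (∀ m : ℕ, q < m → ∀ x ∈ C, (Dop ω)^[m] f x = 0)
    ∧ (∀ x ∈ C,
        ∑ m ∈ Finset.range (q + 1),
            ((-1 / 2 : ℝ)) ^ m / (Nat.factorial m) * ((Dop ω)^[m] f) x
          = (-2 : ℝ) ^ q * (Nat.factorial q)
              * laguerrePoly (2 * j * p + γ) q ((x.1 ^ 2 + x.2 ^ 2) / 2) * h x) := by
  subst hC hγ
  exact stmt_14_general hp (by linarith) (by linarith)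
    (by linarith [show (0 : ℝ) ≤ 2 * j * p + p * (k₀ + k₁) by positivity]) hω hh hf
end

section
/- Let k₀, k₁ ≥ 0 and let F : ℝ → ℝ be twice continuously differentiable. Define g(θ) = F(cos²θ). Then for every θ ∈ (0, π/2), with z = cos²θ: (1/2)g''(θ) + (k₀ cot θ − k₁ tan θ) g'(θ) = 2z(1−z) F''(z) + [ (2k₁+1) − (2k₀+2k₁+2) z ] F'(z). That is, the map θ ↦ cos²θ intertwines the angular generator (1/2)∂²_θ + (k₀ cot θ − k₁ tan θ)∂_θ of the dihedral radial Dunkl process with the generator 2z(1−z)∂²_z + (d − (d+d')z)∂_z of the Jacobi process of parameters d = 2k₁+1, d' = 2k₀+1. -/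
open Real

/-!
A second-order operator `L = a ∂² + b ∂` satisfies `L (F ∘ φ) = (a φ'²) F'' ∘ φ + (L φ) F' ∘ φ`, so
`φ` intertwines `L` with `α ∂² + β ∂` as soon as `a φ'² = α ∘ φ` and `L φ = β ∘ φ`. For the angular
operator and `φ = cos²`, these are the two identities `φ'² / 2 = 2 φ (1 - φ)` and
`L φ = (2k₁ + 1) - (2k₀ + 2k₁ + 2) φ`, which follow from `φ' = -2 sin cos`, `φ'' = 2 (sin² - cos²)`
and `sin² = 1 - φ`.
-/

section DiffusionGenerator

variable {𝕜 E : Type*} [NontriviallyNormedField 𝕜] [NormedAddCommGroup E] [NormedSpace 𝕜 E]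

/-- The second-order operator `a ∂² + b ∂` in one variable. Probabilistically, it is the generator
of a diffusion with drift `b` and squared diffusion coefficient `2a`. -/
noncomputable def diffusionGenerator (a b : 𝕜 → 𝕜) (F : 𝕜 → E) (x : 𝕜) : E :=
  a x • deriv (deriv F) x + b x • deriv F x

theorem deriv_deriv_scomp {F : 𝕜 → E} {φ : 𝕜 → 𝕜} {x : 𝕜}
    (hF : ContDiffAt 𝕜 2 F (φ x)) (hφ : ContDiffAt 𝕜 2 φ x) :
    deriv (deriv (F ∘ φ)) x =
      deriv φ x ^ 2 • deriv (deriv F) (φ x) + deriv (deriv φ) x • deriv F (φ x) := by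
  simpa only [iteratedDeriv_succ, iteratedDeriv_zero] using iteratedDeriv_scomp_two hF hφ

theorem diffusionGenerator_comp (a b : 𝕜 → 𝕜) {F : 𝕜 → E} {φ : 𝕜 → 𝕜} {x : 𝕜}
    (hF : ContDiffAt 𝕜 2 F (φ x)) (hφ : ContDiffAt 𝕜 2 φ x) :
    diffusionGenerator a b (F ∘ φ) x =
      (a x * deriv φ x ^ 2) • deriv (deriv F) (φ x)
        + diffusionGenerator a b φ x • deriv F (φ x) := by
  have deriv_comp : deriv (F ∘ φ) x = deriv φ x • deriv F (φ x) :=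
    deriv.scomp x (hF.differentiableAt two_ne_zero) (hφ.differentiableAt two_ne_zero)
  simp only [diffusionGenerator, deriv_deriv_scomp hF hφ, deriv_comp, smul_eq_mul]
  module

theorem diffusionGenerator_comp_eq {a b α β : 𝕜 → 𝕜} {F : 𝕜 → E} {φ : 𝕜 → 𝕜} {x : 𝕜}
    (hF : ContDiffAt 𝕜 2 F (φ x)) (hφ : ContDiffAt 𝕜 2 φ x)
    (hα : a x * deriv φ x ^ 2 = α (φ x)) (hβ : diffusionGenerator a b φ x = β (φ x)) :
    diffusionGenerator a b (F ∘ φ) x = diffusionGenerator α β F (φ x) := by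
  rw [diffusionGenerator_comp a b hF hφ, hα, hβ, diffusionGenerator]

end DiffusionGenerator

section JacobiIntertwining

variable {E : Type*} [NormedAddCommGroup E] [NormedSpace ℝ E]

/-- The generator `2z(1 - z) ∂² + (d - (d + d')z) ∂` of the Jacobi process of parameters `d`, `d'`,
as a differential operator on functions on the whole line. -/
noncomputable def jacobiGenerator (d d' : ℝ) : (ℝ → E) → ℝ → E :=
  diffusionGenerator (fun z ↦ 2 * z * (1 - z)) (fun z ↦ d - (d + d') * z)

/-- The generator `(1/2) ∂² + (k₀ cot θ - k₁ tan θ) ∂` of the angular part of the dihedral radial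
Dunkl process. It is only meaningful where `sin θ` and `cos θ` do not vanish: elsewhere `cot θ` or
`tan θ` takes the junk value `0`. -/
noncomputable def dihedralAngularGenerator (k₀ k₁ : ℝ) : (ℝ → E) → ℝ → E :=
  diffusionGenerator (fun _ ↦ 1 / 2) (fun θ ↦ k₀ * cot θ - k₁ * tan θ)

theorem deriv_cos_sq : deriv (fun θ ↦ cos θ ^ 2) = fun θ ↦ -2 * sin θ * cos θ := by
  ext θ
  rw [((hasDerivAt_cos θ).fun_pow 2).deriv]
  ring

theorem deriv_deriv_cos_sq (θ : ℝ) :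
    deriv (deriv fun θ ↦ cos θ ^ 2) θ = 2 * (sin θ ^ 2 - cos θ ^ 2) := by
  rw [deriv_cos_sq, (((hasDerivAt_sin θ).const_mul (-2)).fun_mul (hasDerivAt_cos θ)).deriv]
  ring

theorem cot_mul_sin {θ : ℝ} (hsin : sin θ ≠ 0) : cot θ * sin θ = cos θ := by
  rw [cot_eq_cos_div_sin, div_mul_cancel₀ _ hsin]

theorem half_mul_deriv_cos_sq_sq (θ : ℝ) :
    1 / 2 * deriv (fun θ ↦ cos θ ^ 2) θ ^ 2 = 2 * cos θ ^ 2 * (1 - cos θ ^ 2) := by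
  rw [deriv_cos_sq, ← sin_sq]
  ring

theorem dihedralAngularGenerator_cos_sq (k₀ k₁ : ℝ) {θ : ℝ}
    (hsin : sin θ ≠ 0) (hcos : cos θ ≠ 0) :
    dihedralAngularGenerator k₀ k₁ (fun θ ↦ cos θ ^ 2) θ =
      (2 * k₁ + 1) - ((2 * k₁ + 1) + (2 * k₀ + 1)) * cos θ ^ 2 := by
  have drift_term : (k₀ * cot θ - k₁ * tan θ) * (-2 * sin θ * cos θ) =
      2 * k₁ * sin θ ^ 2 - 2 * k₀ * cos θ ^ 2 := by
    linear_combination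
      -2 * k₀ * cos θ * cot_mul_sin hsin + 2 * k₁ * sin θ * tan_mul_cos hcos
  simp only [dihedralAngularGenerator, diffusionGenerator, smul_eq_mul, deriv_deriv_cos_sq]
  rw [deriv_cos_sq, drift_term, sin_sq]
  ring

theorem stmt_15_general (k₀ k₁ : ℝ) {F : ℝ → E} {θ : ℝ}
    (hF : ContDiffAt ℝ 2 F (cos θ ^ 2)) (hsin : sin θ ≠ 0) (hcos : cos θ ≠ 0) :
    dihedralAngularGenerator k₀ k₁ (F ∘ fun θ ↦ cos θ ^ 2) θ =
      jacobiGenerator (2 * k₁ + 1) (2 * k₀ + 1) F (cos θ ^ 2) :=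
  diffusionGenerator_comp_eq hF (by fun_prop) (half_mul_deriv_cos_sq_sq θ)
    (dihedralAngularGenerator_cos_sq k₀ k₁ hsin hcos)

end JacobiIntertwining

/-- For `k₀, k₁ ≥ 0` and a `C²` function `F : ℝ → ℝ`, the function
`g(θ) = F(cos²θ)` satisfies, on `(0, π/2)`, with `z = cos²θ`,
`(1/2)g'' + (k₀ cot θ − k₁ tan θ) g' = 2z(1−z)F''(z) + [(2k₁+1) − (2k₀+2k₁+2)z]F'(z)`:
the map `θ ↦ cos²θ` intertwines the angular dihedral generator with the generator of
the Jacobi process of parameters `d = 2k₁+1`, `d' = 2k₀+1`. -/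
theorem stmt_15 (k₀ k₁ : ℝ) (hk₀ : 0 ≤ k₀) (hk₁ : 0 ≤ k₁)
    (F : ℝ → ℝ) (hF : ContDiff ℝ 2 F)
    (g : ℝ → ℝ) (hg : ∀ θ : ℝ, g θ = F (cos θ ^ 2)) :
    ∀ θ : ℝ, 0 < θ → θ < π / 2 →
      (1 / 2) * deriv (deriv g) θ + (k₀ * Real.cot θ - k₁ * Real.tan θ) * deriv g θ
        = 2 * cos θ ^ 2 * (1 - cos θ ^ 2) * deriv (deriv F) (cos θ ^ 2)
          + ((2 * k₁ + 1) - (2 * k₀ + 2 * k₁ + 2) * cos θ ^ 2) * deriv F (cos θ ^ 2) := by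
  intro θ hθ₀ hθ₁
  obtain rfl : g = F ∘ fun θ ↦ cos θ ^ 2 := funext hg
  have hsin : sin θ ≠ 0 := (sin_pos_of_pos_of_lt_pi hθ₀ (by linarith)).ne'
  have hcos : cos θ ≠ 0 := (cos_pos_of_mem_Ioo ⟨by linarith, hθ₁⟩).ne'
  have intertwining := stmt_15_general k₀ k₁ hF.contDiffAt hsin hcos
  simp only [dihedralAngularGenerator, jacobiGenerator, diffusionGenerator, smul_eq_mul]
    at intertwining
  linear_combination intertwining
end
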